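/- Let ρ, M, M̃ be as in the model context and let T be the unique contraction on L²(ρ) with T∘M = M̃. Then: (a) if J is a self-adjoint unitary operator on L²(ρ) commuting with M, the operator T∘J is asymptotically stable; (b) if J̃ is a self-adjoint unitary operator on L²(ρ) commuting with M̃, the operator J̃∘T is asymptotically stable. (This corresponds to spectral data with real-valued unimodular functions Ψ, Ψ̃, one of which is identically 1, i.e. to self-adjoint Hankel operators Γ, Γ̃ one of which is positive semi-definite.) -/

import Mathlib

open MeasureTheory Filter
open scoped InnerProductSpace ENNReal

section abs
variable {H : Type*} [NormedAddCommGroup H] [InnerProductSpace ℂ H] [CompleteSpace H]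

lemma aux_logconv (b : ℕ → ℝ) (B : ℝ) (hB : ∀ n, b n ≤ B)
    (hc : ∀ n, b (n+1) ≤ (b n + b (n+2)) / 2) : Antitone b := by
  apply antitone_nat_of_succ_le
  intro n
  by_contra! h
  have key : ∀ k : ℕ, b (n+k+1) - b (n+k) ≥ b (n+1) - b n := by
    intro k
    induction k with
    | zero => simp
    | succ k ih =>
      have := hc (n+k)
      have e1 : n + (k+1) + 1 = n + k + 2 := by ring
      have e2 : n + (k+1) = n + k + 1 := by ring
      rw [e1, e2]; linarith
  have key2 : ∀ k : ℕ, b (n+k) ≥ b n + k * (b (n+1) - b n) := by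
    intro k
    induction k with
    | zero => simp
    | succ k ih =>
      have := key k
      push_cast
      rw [← add_assoc]; linarith
  obtain ⟨k, hk⟩ := exists_nat_gt ((B - b n) / (b (n+1) - b n))
  rw [div_lt_iff₀ (by linarith)] at hk
  have := key2 k
  have := hB (n+k)
  linarith

lemma aux_conv (A C R : H →L[ℂ] H) (hAC : ∀ x y, ⟪A x, y⟫_ℂ = ⟪x, C y⟫_ℂ)
    (hC : ∀ x, ‖C x‖ ≤ ‖x‖) (hA : ∀ x, ‖A x‖ ≤ ‖x‖)
    (hR : ∀ x y, ⟪R x, y⟫_ℂ = ⟪x, R y⟫_ℂ)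
    (hint : ∀ x, A (R (R x)) = R (R (C x)))
    (hker : ∀ y, A (A y) = y → y = 0) (x : H) :
    Tendsto (fun n : ℕ => (A ^ n) (R (R x))) atTop (nhds 0) := by
  -- inner products
  have hCn : ∀ n : ℕ, ∀ x, ‖(C^n) x‖ ≤ ‖x‖ := by
    intro n
    induction n with
    | zero => intro x; simp
    | succ n ih => intro x; rw [pow_succ]; exact (ih _).trans (hC x)
  have hstep : ∀ u v, ⟪R (C u), R v⟫_ℂ = ⟪R u, R (C v)⟫_ℂ := by
    intro u v
    rw [← hR, ← hint, hAC, hR, hR]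
  have hstepn : ∀ m n : ℕ, ∀ v, ⟪R ((C^(m+n)) x), R v⟫_ℂ = ⟪R ((C^m) x), R ((C^n) v)⟫_ℂ := by
    intro m n
    induction n with
    | zero => intro v; simp
    | succ n ih =>
      intro v
      rw [← add_assoc, pow_succ' C (m+n)]
      rw [mul_apply_eq_comp, hstep, ih, pow_succ C n]; rfl
  set b : ℕ → ℝ := fun k => ‖R ((C^k) x)‖^2 with hb
  have hre : ∀ m k : ℕ, RCLike.re ⟪R ((C^(k + m + m)) x), R ((C^k) x)⟫_ℂ = b (k+m) := by
    intro m k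
    rw [hstepn (k+m) m, ← mul_apply_eq_comp (C^m), ← pow_add, add_comm m k]
    exact inner_self_eq_norm_sq (𝕜 := ℂ) _
  have hdiff : ∀ m k : ℕ, ‖R ((C^(k + m + m)) x) - R ((C^k) x)‖^2 = b (k+m+m) + b k - 2 * b (k+m) := by
    intro m k
    rw [@norm_sub_sq ℂ, hre]; simp only [hb]; ring
  have hanti : Antitone b := by
    apply aux_logconv b ((‖R‖ * ‖x‖)^2)
    · intro n
      simp only [hb]
      gcongr
      exact (R.le_opNorm _).trans (by gcongr; exact hCn n x)
    · intro n
      have := hdiff 1 n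
      have h2 : 0 ≤ ‖R ((C^(n + 1 + 1)) x) - R ((C^n) x)‖^2 := by positivity
      rw [this] at h2
      change 0 ≤ b (n+2) + _ - _ at h2
      linarith
  obtain ⟨L, hL⟩ : ∃ L, Tendsto b atTop (nhds L) :=
    ⟨_, tendsto_atTop_ciInf hanti ⟨0, by rintro _ ⟨n, rfl⟩; simp only [hb]; positivity⟩⟩
  have hLle : ∀ n, L ≤ b n := fun n => hanti.le_of_tendsto hL n
  have hcau : CauchySeq (fun k : ℕ => R ((C^(2*k)) x)) := by
    rw [Metric.cauchySeq_iff']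
    intro ε hε
    have : ∀ᶠ n in atTop, b n < L + ε^2/2 := hL.eventually_lt_const (by linarith [pow_pos hε 2])
    obtain ⟨N, hN⟩ := this.exists_forall_of_atTop
    refine ⟨N, fun n hn => ?_⟩
    obtain ⟨m, rfl⟩ := Nat.exists_eq_add_of_le hn
    have h := hdiff m (2*N)
    rw [show 2*N+m+m = 2*(N+m) by ring] at h
    have h1 := hN (2*(N+m)) (by omega)
    have h2 := hN (2*N) (by omega)
    have h3 := hLle (2*N+m)
    rw [dist_eq_norm]
    apply lt_of_pow_lt_pow_left₀ 2 hε.le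
    rw [h]; linarith
  obtain ⟨z, hz⟩ := cauchySeq_tendsto_of_complete hcau
  have hAn : ∀ n : ℕ, ∀ v, (A^n) (R (R v)) = R (R ((C^n) v)) := by
    intro n
    induction n with
    | zero => intro v; simp
    | succ n ih => intro v; rw [pow_succ, mul_apply_eq_comp, hint, ih, pow_succ]; rfl
  have hev : Tendsto (fun k : ℕ => (A^(2*k)) (R (R x))) atTop (nhds (R z)) := by
    simp_rw [hAn]
    exact (R.continuous.tendsto z).comp hz
  have hfix : A (A (R z)) = R z := by
    have h1 : Tendsto (fun k : ℕ => (A^(2*(k+1))) (R (R x))) atTop (nhds (R z)) :=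
      hev.comp (tendsto_add_atTop_nat 1)
    have h2 : Tendsto (fun k : ℕ => A (A ((A^(2*k)) (R (R x))))) atTop (nhds (A (A (R z)))) :=
      ((A.continuous.comp A.continuous).tendsto _).comp hev
    refine tendsto_nhds_unique h2 (h1.congr fun k => ?_)
    rw [show 2*(k+1) = 2*k+1+1 by ring, pow_succ', pow_succ']; rfl
  rw [hker _ hfix] at hev
  have hant : Antitone (fun n : ℕ => ‖(A^n) (R (R x))‖) := by
    apply antitone_nat_of_succ_le
    intro n
    rw [pow_succ']; exact hA _
  rw [tendsto_zero_iff_norm_tendsto_zero] at hev ⊢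
  rw [Metric.tendsto_atTop] at hev ⊢
  intro ε hε
  obtain ⟨N, hN⟩ := hev ε hε
  refine ⟨2*N, fun n hn => ?_⟩
  have h1 := hN N le_rfl
  have h2 := hant hn
  simp only [dist_zero_right, norm_norm] at h1 ⊢
  exact lt_of_le_of_lt h2 h1

lemma aux_dense (A : H →L[ℂ] H) (hA : ∀ x, ‖A x‖ ≤ ‖x‖) (S : Set H) (hS : Dense S)
    (h : ∀ x ∈ S, Tendsto (fun n : ℕ => (A ^ n) x) atTop (nhds 0)) (x : H) :
    Tendsto (fun n : ℕ => (A ^ n) x) atTop (nhds 0) := by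
  have hAn : ∀ n : ℕ, ∀ x, ‖(A^n) x‖ ≤ ‖x‖ := by
    intro n
    induction n with
    | zero => intro x; simp
    | succ n ih => intro x; rw [pow_succ]; exact (ih _).trans (hA x)
  rw [Metric.tendsto_atTop]
  intro ε hε
  obtain ⟨y, hyS, hy⟩ := Metric.dense_iff.1 hS x (ε/2) (by linarith)
  obtain ⟨N, hN⟩ := Metric.tendsto_atTop.1 (h _ hy) (ε/2) (by linarith)
  refine ⟨N, fun n hn => ?_⟩
  have h1 := hN n hn
  rw [dist_zero_right] at h1 ⊢
  have h2 := hAn n (x - y)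
  rw [Metric.mem_ball, dist_comm, dist_eq_norm] at hyS
  calc ‖(A^n) x‖ = ‖(A^n) (x - y) + (A^n) y‖ := by rw [← map_add]; simp
    _ ≤ _ := norm_add_le _ _
    _ < ε := by linarith

lemma aux_fixed (A C K : H →L[ℂ] H) (q : H) (hAC : ∀ x y, ⟪A x, y⟫_ℂ = ⟪x, C y⟫_ℂ)
    (hC : ∀ x, ‖C x‖ ≤ ‖x‖) (hA : ∀ x, ‖A x‖^2 = ‖x‖^2 - ‖⟪q, x⟫_ℂ‖^2)
    (hK : ∀ x, A (K x) = K (C x)) (y : H) (hy : A (A y) = y) (n : ℕ) :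
    ⟪q, (K^n) y⟫_ℂ = 0 := by
  have hA' : ∀ x, ‖A x‖ ≤ ‖x‖ := fun x => by
    apply (pow_le_pow_iff_left₀ (norm_nonneg _) (norm_nonneg _) two_ne_zero).1
    rw [hA]; nlinarith [norm_nonneg ⟪q, x⟫_ℂ]
  have hfix : ∀ n : ℕ, A (A ((K^n) y)) = (K^n) y := by
    intro n
    induction n with
    | zero => simpa
    | succ n ih =>
      set u := (K^n) y
      have hCC : C (C u) = u := by
        have h1 : ‖C (C u) - u‖^2 ≤ 0 := by
          rw [@norm_sub_sq ℂ, ← inner_conj_symm, RCLike.conj_re, ← hAC, ← hAC, ih, inner_self_eq_norm_sq]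
          have := (hC _).trans (hC u)
          have h0 := norm_nonneg (C (C u))
          nlinarith
        have : ‖C (C u) - u‖ = 0 := by nlinarith [norm_nonneg (C (C u) - u)]
        exact sub_eq_zero.1 (norm_eq_zero.1 this)
      rw [pow_succ']
      change A (A (K u)) = K u
      rw [hK, hK, hCC]
  have h := hfix n
  set u := (K^n) y
  have h1 := hA' (A u)
  rw [h] at h1
  have h2 := hA u
  have h3 : ‖⟪q, u⟫_ℂ‖^2 ≤ 0 := by nlinarith [norm_nonneg u, norm_nonneg (A u)]
  have : ‖⟪q, u⟫_ℂ‖ = 0 := by nlinarith [norm_nonneg ⟪q, u⟫_ℂ]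
  exact norm_eq_zero.1 this

lemma aux_sqrt (P : H →L[ℂ] H) (hP : P.IsPositive) : ∃ R : H →L[ℂ] H,
    (∀ x y, ⟪R x, y⟫_ℂ = ⟪x, R y⟫_ℂ) ∧ ∀ x, R (R x) = P x := by
  have h0 : (0 : H →L[ℂ] H) ≤ P := (ContinuousLinearMap.nonneg_iff_isPositive P).2 hP
  refine ⟨CFC.sqrt P, ?_, fun x => ?_⟩
  · have h1 : (CFC.sqrt P).IsPositive := (ContinuousLinearMap.nonneg_iff_isPositive _).1 (CFC.sqrt_nonneg P)
    exact h1.isSymmetric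
  · exact congrArg (fun F : H →L[ℂ] H => F x) (CFC.sqrt_mul_sqrt_self P h0)

end abs

section meas
variable (ρ : Measure ℝ) [IsFiniteMeasure ρ]

lemma aux_cyclic (hcarr : ρ {s : ℝ | s ≤ 0} = 0) (hbddsupp : ∃ b : ℝ, ρ {s : ℝ | b < s} = 0)
    (g : ℝ → ℂ) (hg : Integrable g ρ) (h : ∀ n : ℕ, ∫ s, ((s ^ (2*n) : ℝ)) • g s ∂ρ = 0) :
    ∀ᵐ s ∂ρ, g s = 0 := by
  obtain ⟨b, hb⟩ := hbddsupp
  have hpos : ∀ᵐ s ∂ρ, 0 < s := by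
    rw [ae_iff]; simpa using hcarr
  have hle : ∀ᵐ s ∂ρ, s ≤ b := by
    rw [ae_iff]; simpa using hb
  apply ae_eq_zero_of_integral_contDiff_smul_eq_zero hg.locallyIntegrable
  intro φ hφ _
  have hφc := hφ.continuous
  have hmem : ∀ᵐ s ∂ρ, s^2 ∈ Set.Icc 0 (b^2) := by
    filter_upwards [hpos, hle] with s h1 h2
    exact ⟨by positivity, by gcongr⟩
  have hintn : ∀ n : ℕ, Integrable (fun s => ((s ^ (2*n) : ℝ)) • g s) ρ := by
    intro n
    refine hg.bdd_smul (φ := fun s : ℝ => s ^ (2*n)) ((b^2)^n)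
      (continuous_pow (2*n)).aestronglyMeasurable ?_
    filter_upwards [hmem] with s hs
    rw [pow_mul, Real.norm_of_nonneg (pow_nonneg hs.1 n)]
    exact pow_le_pow_left₀ hs.1 hs.2 n
  have hpoly : ∀ p : Polynomial ℝ, Integrable (fun s => (p.eval (s^2)) • g s) ρ ∧
      ∫ s, (p.eval (s^2)) • g s ∂ρ = 0 := by
    intro p
    have he : (fun s => (p.eval (s^2)) • g s) =
        fun s => ∑ i ∈ Finset.range (p.natDegree + 1), p.coeff i • ((s ^ (2*i) : ℝ)) • g s := by
      funext s
      rw [Polynomial.eval_eq_sum_range, Finset.sum_smul]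
      refine Finset.sum_congr rfl fun i _ => ?_
      rw [smul_smul, pow_mul]
    rw [he]
    have hI : ∀ i : ℕ, Integrable (fun s => p.coeff i • ((s ^ (2*i) : ℝ)) • g s) ρ :=
      fun i => (hintn i).smul (p.coeff i)
    refine ⟨integrable_finsetSum _ fun i _ => hI i, ?_⟩
    rw [integral_finsetSum _ fun i _ => hI i]
    refine Finset.sum_eq_zero fun i _ => ?_
    rw [integral_smul, h, smul_zero]
  have hbound : ∀ ε > 0, ‖∫ s, φ s • g s ∂ρ‖ ≤ ε * ∫ s, ‖g s‖ ∂ρ := by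
    intro ε hε
    obtain ⟨p, hp⟩ := exists_polynomial_near_of_continuousOn 0 (b^2) (fun t => φ (Real.sqrt t))
      (hφc.comp Real.continuous_sqrt).continuousOn ε hε
    have hbd : ∀ᵐ s ∂ρ, ‖(p.eval (s^2) - φ s)‖ ≤ ε := by
      filter_upwards [hpos, hmem] with s h1 h2
      have := hp _ h2
      rw [Real.sqrt_sq h1.le] at this
      exact this.le
    have hi : Integrable (fun s => (p.eval (s^2) - φ s) • g s) ρ :=
      hg.bdd_smul ε (by
        apply Continuous.aestronglyMeasurable
        exact (p.continuous.comp (continuous_pow 2)).sub hφc) hbd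
    have e : ∫ s, φ s • g s ∂ρ = - ∫ s, (p.eval (s^2) - φ s) • g s ∂ρ := by
      have : (fun s => φ s • g s) = fun s => (p.eval (s^2)) • g s - (p.eval (s^2) - φ s) • g s := by
        funext s; rw [sub_smul]; abel
      rw [this, integral_sub (hpoly p).1 hi, (hpoly p).2, zero_sub]
    rw [e, norm_neg, ← integral_const_mul]
    refine norm_integral_le_of_norm_le (hg.norm.const_mul ε) ?_
    filter_upwards [hbd] with s hs
    rw [norm_smul]; gcongr
  have h0 : ‖∫ s, φ s • g s ∂ρ‖ ≤ 0 := by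
    have ht : Tendsto (fun ε : ℝ => ε * ∫ s, ‖g s‖ ∂ρ) (nhdsWithin 0 (Set.Ioi 0)) (nhds 0) := by
      have : Tendsto (fun ε : ℝ => ε * ∫ s, ‖g s‖ ∂ρ) (nhds 0) (nhds (0 * ∫ s, ‖g s‖ ∂ρ)) :=
        tendsto_id.mul_const _
      rw [zero_mul] at this
      exact this.mono_left nhdsWithin_le_nhds
    exact ge_of_tendsto ht (by filter_upwards [self_mem_nhdsWithin] with ε hε using hbound ε hε)
  exact norm_le_zero_iff.1 h0

end meas

/-- **Asymptotic stability for real spectral data with one trivial phase.** In the model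
`L²(ρ)` with `T` the unique contraction satisfying `T∘M = M̃`: (a) for any self-adjoint
unitary `J` commuting with `M`, the operator `T∘J` is asymptotically stable; (b) for any
self-adjoint unitary `J̃` commuting with `M̃`, the operator `J̃∘T` is asymptotically stable.
(This corresponds to spectral data with real-valued `Ψ, Ψ̃`, one of which is `≡ 1`.) -/
theorem selfadjoint_one_positive_asymptotically_stable
    (ρ : Measure ℝ) [IsFiniteMeasure ρ]
    (hcarr : ρ {s : ℝ | s ≤ 0} = 0)
    (hbddsupp : ∃ b : ℝ, ρ {s : ℝ | b < s} = 0)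
    (hnorm : ∫⁻ s, ENNReal.ofReal (s⁻¹ ^ 2) ∂ρ ≤ 1)
    (one : Lp ℂ 2 ρ)
    (hone : ∀ᵐ s ∂ρ, (one : ℝ → ℂ) s = 1)
    (M Mt : Lp ℂ 2 ρ →L[ℂ] Lp ℂ 2 ρ)
    (hM : ∀ f : Lp ℂ 2 ρ, ∀ᵐ s ∂ρ, (M f : ℝ → ℂ) s = (s : ℂ) * (f : ℝ → ℂ) s)
    (hMt_pos : Mt.IsPositive)
    (hMt_sq : ∀ f, Mt (Mt f) = M (M f) - ⟪one, f⟫_ℂ • one)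
    (T : Lp ℂ 2 ρ →L[ℂ] Lp ℂ 2 ρ) (hT : T.comp M = Mt) :
    (∀ J : Lp ℂ 2 ρ →L[ℂ] Lp ℂ 2 ρ, IsSelfAdjoint J → J.comp J = 1 →
      J.comp M = M.comp J →
      ∀ x : Lp ℂ 2 ρ, Tendsto (fun n : ℕ => ((T.comp J) ^ n) x) atTop (nhds 0)) ∧
    (∀ Jt : Lp ℂ 2 ρ →L[ℂ] Lp ℂ 2 ρ, IsSelfAdjoint Jt → Jt.comp Jt = 1 →
      Jt.comp Mt = Mt.comp Jt →
      ∀ x : Lp ℂ 2 ρ, Tendsto (fun n : ℕ => ((Jt.comp T) ^ n) x) atTop (nhds 0)) := by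
  have hpos : ∀ᵐ s ∂ρ, 0 < s := by
    rw [ae_iff]; simpa using hcarr
  have hMsym : ∀ f g, ⟪M f, g⟫_ℂ = ⟪f, M g⟫_ℂ := by
    intro f g
    rw [L2.inner_def, L2.inner_def]
    apply integral_congr_ae
    filter_upwards [hM f, hM g] with s h1 h2
    rw [h1, h2]
    simp only [RCLike.inner_apply, map_mul, Complex.conj_ofReal]
    ring
  have hMpos : M.IsPositive := by
    refine ⟨hMsym, fun f => ?_⟩
    change 0 ≤ RCLike.re ⟪M f, f⟫_ℂ
    rw [L2.inner_def, ← integral_re (L2.integrable_inner _ _)]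
    apply integral_nonneg_of_ae
    filter_upwards [hM f, hpos] with s h1 h2
    rw [h1]
    simp only [RCLike.inner_apply, map_mul, Complex.conj_ofReal]
    rw [mul_left_comm, Complex.mul_conj, ← Complex.ofReal_mul]
    simp only [Pi.zero_apply]
    exact mul_nonneg h2.le (Complex.normSq_nonneg _)
  have hMinj : ∀ f, M f = 0 → f = 0 := by
    intro f hf
    rw [Lp.eq_zero_iff_ae_eq_zero] at hf ⊢
    filter_upwards [hM f, hpos, hf] with s h1 h2 h3
    rw [h1] at h3
    simpa [h2.ne'] using h3
  have hMdense : Dense (Set.range M) := by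
    have : Dense ((LinearMap.range (M : Lp ℂ 2 ρ →ₗ[ℂ] Lp ℂ 2 ρ) : Submodule ℂ (Lp ℂ 2 ρ)) : Set (Lp ℂ 2 ρ)) := by
      rw [Submodule.dense_iff_topologicalClosure_eq_top, Submodule.topologicalClosure_eq_top_iff,
        Submodule.eq_bot_iff]
      intro g hg
      apply hMinj
      rw [Submodule.mem_orthogonal] at hg
      have := hg (M (M g)) ⟨M g, rfl⟩
      rw [hMsym] at this
      exact inner_self_eq_zero.1 this
    exact this
  have hpm : MemLp (fun s : ℝ => ((s⁻¹ : ℝ) : ℂ)) 2 ρ := by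
    refine ⟨by fun_prop, ?_⟩
    rw [eLpNorm_lt_top_iff_lintegral_rpow_enorm_lt_top (by norm_num) (by norm_num)]
    refine lt_of_le_of_lt (le_trans (le_of_eq ?_) hnorm) ENNReal.one_lt_top
    apply lintegral_congr
    intro s
    rw [← ofReal_norm, Complex.norm_real]
    simp only [ENNReal.toReal_ofNat, ENNReal.rpow_ofNat]
    rw [← ENNReal.ofReal_pow (norm_nonneg _), Real.norm_eq_abs, sq_abs]
  set p : Lp ℂ 2 ρ := hpm.toLp _ with hp
  have hpc : ∀ᵐ s ∂ρ, (p : ℝ → ℂ) s = ((s⁻¹ : ℝ) : ℂ) := hpm.coeFn_toLp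
  have hMp : M p = one := by
    apply Lp.ext
    filter_upwards [hM p, hpc, hone, hpos] with s h1 h2 h3 h4
    rw [h1, h2, h3, ← Complex.ofReal_mul, mul_inv_cancel₀ h4.ne', Complex.ofReal_one]
  have hMtsym : ∀ f g, ⟪Mt f, g⟫_ℂ = ⟪f, Mt g⟫_ℂ := hMt_pos.isSymmetric
  have hTM : ∀ f, T (M f) = Mt f := fun f => congrArg (fun F : Lp ℂ 2 ρ →L[ℂ] Lp ℂ 2 ρ => F f) hT
  have hTn : ∀ x, ‖T x‖^2 = ‖x‖^2 - ‖⟪p, x⟫_ℂ‖^2 := by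
    have hfun : (fun x => ‖T x‖^2) = fun x => ‖x‖^2 - ‖⟪p, x⟫_ℂ‖^2 := by
      apply Continuous.ext_on hMdense (by fun_prop) (by fun_prop)
      rintro _ ⟨f, rfl⟩
      simp only
      rw [hTM, ← hMsym, hMp, ← inner_self_eq_norm_sq (𝕜 := ℂ), hMtsym, hMt_sq, inner_sub_right,
        inner_smul_right, ← hMsym, map_sub, inner_self_eq_norm_sq, inner_mul_symm_re_eq_norm,
        norm_mul, norm_inner_symm f one, sq ‖⟪one, f⟫_ℂ‖]
    exact fun x => congrFun hfun x
  have hTc : ∀ x, ‖T x‖ ≤ ‖x‖ := fun x => by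
    apply (pow_le_pow_iff_left₀ (norm_nonneg _) (norm_nonneg _) two_ne_zero).1
    rw [hTn]; nlinarith [norm_nonneg ⟪p, x⟫_ℂ]
  set Ts := ContinuousLinearMap.adjoint T with hTs
  have hTTs : ∀ x y, ⟪T x, y⟫_ℂ = ⟪x, Ts y⟫_ℂ := fun x y =>
    (ContinuousLinearMap.adjoint_inner_right T x y).symm
  have hTsc : ∀ x, ‖Ts x‖ ≤ ‖x‖ := by
    intro x
    have h1 : ‖Ts x‖^2 ≤ ‖Ts x‖ * ‖x‖ := by
      rw [← inner_self_eq_norm_sq (𝕜 := ℂ), ← hTTs]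
      exact (re_inner_le_norm _ _).trans (by gcongr; exact hTc _)
    by_contra! hc
    nlinarith [norm_nonneg x]
  have hMTs : ∀ x, M (Ts x) = Mt x := by
    intro x
    refine ext_inner_left ℂ fun y => ?_
    rw [← hMsym, ← hTTs, hTM, hMtsym]
  have hMn : ∀ (n : ℕ) (y : Lp ℂ 2 ρ), ∀ᵐ s ∂ρ, ((M^n) y : ℝ → ℂ) s = (s : ℂ)^n * (y : ℝ → ℂ) s := by
    intro n y
    induction n with
    | zero => simp
    | succ n ih =>
      rw [pow_succ' M]
      filter_upwards [ih, hM ((M^n) y)] with s h1 h2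
      rw [mul_apply_eq_comp, h2, h1]; ring
  have hcyc : ∀ y : Lp ℂ 2 ρ, (∀ n : ℕ, ⟪p, (M^(2*n)) y⟫_ℂ = 0) → y = 0 := by
    intro y hy
    have hgi : Integrable (fun s => ⟪(p : ℝ → ℂ) s, (y : ℝ → ℂ) s⟫_ℂ) ρ := L2.integrable_inner p y
    have h := aux_cyclic ρ hcarr hbddsupp _ hgi (fun n => by
      rw [← hy n, L2.inner_def]
      apply integral_congr_ae
      filter_upwards [hMn (2*n) y] with s h1
      rw [h1]
      simp only [RCLike.inner_apply, Complex.real_smul]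
      push_cast; ring)
    rw [Lp.eq_zero_iff_ae_eq_zero]
    filter_upwards [h, hpc, hpos] with s h1 h2 h3
    rw [h2] at h1
    simpa [h3.ne'] using h1
  have hJn : ∀ J : Lp ℂ 2 ρ →L[ℂ] Lp ℂ 2 ρ, IsSelfAdjoint J → J.comp J = 1 →
      (∀ x y, ⟪J x, y⟫_ℂ = ⟪x, J y⟫_ℂ) ∧ (∀ x, J (J x) = x) ∧ (∀ x, ‖J x‖ = ‖x‖) := by
    intro J hJ hJJ
    have h1 : ∀ x y, ⟪J x, y⟫_ℂ = ⟪x, J y⟫_ℂ := hJ.isSymmetric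
    have h2 : ∀ x, J (J x) = x := fun x => congrArg (fun F : Lp ℂ 2 ρ →L[ℂ] Lp ℂ 2 ρ => F x) hJJ
    refine ⟨h1, h2, fun x => ?_⟩
    apply (pow_left_inj₀ (norm_nonneg _) (norm_nonneg _) two_ne_zero).1
    rw [← inner_self_eq_norm_sq (𝕜 := ℂ), h1, h2, inner_self_eq_norm_sq]
  constructor
  · intro J hJ hJJ hJM
    obtain ⟨hJs, hJ2, hJnorm⟩ := hJn J hJ hJJ
    have hJM' : ∀ x, J (M x) = M (J x) := fun x =>
      congrArg (fun F : Lp ℂ 2 ρ →L[ℂ] Lp ℂ 2 ρ => F x) hJM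
    have hA : ∀ x, ‖(T.comp J) x‖ ≤ ‖x‖ := fun x => (hTc _).trans (hJnorm x).le
    have hAC : ∀ x y, ⟪(T.comp J) x, y⟫_ℂ = ⟪x, (J.comp Ts) y⟫_ℂ := fun x y => by
      simp only [ContinuousLinearMap.comp_apply]
      rw [hTTs, hJs]
    have hC : ∀ x, ‖(J.comp Ts) x‖ ≤ ‖x‖ := fun x => (hJnorm _).le.trans (hTsc x)
    have hker : ∀ y, (T.comp J) ((T.comp J) y) = y → y = 0 := by
      intro y hy
      have h := aux_fixed (T.comp J) (J.comp Ts) (M.comp J) (J p) hAC hC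
        (fun x => by
          simp only [ContinuousLinearMap.comp_apply]
          rw [hTn, hJnorm, hJs])
        (fun x => by
          simp only [ContinuousLinearMap.comp_apply]
          rw [hJM', hJ2, hJ2, hTM, hMTs]) y hy
      have hsq : (M.comp J)^2 = M^2 := by
        ext1 x
        rw [sq, sq]
        change M (J (M (J x))) = M (M x)
        rw [hJM', hJ2]
      have hcomm : ∀ n : ℕ, ∀ x, J ((M^n) x) = (M^n) (J x) := by
        intro n
        induction n with
        | zero => intro x; rfl
        | succ n ih =>
          intro x
          rw [pow_succ' M]
          change J (M ((M^n) x)) = M ((M^n) (J x))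
          rw [hJM', ih]
      have h0 : J y = 0 := by
        apply hcyc
        intro n
        have := h (2*n)
        rwa [pow_mul, hsq, ← pow_mul, hJs, hcomm] at this
      rw [← hJ2 y, h0, map_zero]
    obtain ⟨R, hR, hRR⟩ := aux_sqrt Mt hMt_pos
    have hconv := aux_conv (T.comp J) (J.comp Ts) R hAC hC hA hR (fun x => by
      simp only [hRR, ContinuousLinearMap.comp_apply]
      rw [← hMTs, hJM', hTM]) hker
    apply aux_dense (T.comp J) hA (Set.range fun f => J (M f))
    · have : Dense (J '' (Set.range M)) :=
        Function.Surjective.denseRange (fun x => ⟨J x, hJ2 x⟩) |>.dense_image J.continuous hMdense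
      rwa [← Set.range_comp] at this
    · rintro _ ⟨f, rfl⟩
      have h1 := hconv f
      rw [← tendsto_add_atTop_iff_nat 1]
      refine h1.congr fun n => ?_
      rw [pow_succ (T.comp J) n, hRR, ← hTM]
      change _ = ((T.comp J)^n) (T (J (J (M f))))
      rw [hJ2]
  · intro J hJ hJJ hJM
    obtain ⟨hJs, hJ2, hJnorm⟩ := hJn J hJ hJJ
    have hJM' : ∀ x, J (Mt x) = Mt (J x) := fun x =>
      congrArg (fun F : Lp ℂ 2 ρ →L[ℂ] Lp ℂ 2 ρ => F x) hJM
    have hA : ∀ x, ‖(J.comp T) x‖ ≤ ‖x‖ := fun x => (hJnorm _).le.trans (hTc x)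
    have hAC : ∀ x y, ⟪(J.comp T) x, y⟫_ℂ = ⟪x, (Ts.comp J) y⟫_ℂ := fun x y => by
      simp only [ContinuousLinearMap.comp_apply]
      rw [hJs, hTTs]
    have hC : ∀ x, ‖(Ts.comp J) x‖ ≤ ‖x‖ := fun x => (hTsc _).trans (hJnorm x).le
    have hAM : ∀ x, (J.comp T) (M x) = M ((Ts.comp J) x) := fun x => by
      simp only [ContinuousLinearMap.comp_apply]
      rw [hTM, hMTs, hJM']
    have hker : ∀ y, (J.comp T) ((J.comp T) y) = y → y = 0 := by
      intro y hy
      have h := aux_fixed (J.comp T) (Ts.comp J) M p hAC hC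
        (fun x => by
          simp only [ContinuousLinearMap.comp_apply]
          rw [hJnorm, hTn]) hAM y hy
      exact hcyc y fun n => h (2*n)
    obtain ⟨R, hR, hRR⟩ := aux_sqrt M hMpos
    have hconv := aux_conv (J.comp T) (Ts.comp J) R hAC hC hA hR (fun x => by
      simp only [hRR]; exact hAM x) hker
    apply aux_dense (J.comp T) hA (Set.range M) hMdense
    rintro _ ⟨f, rfl⟩
    have h1 := hconv f
    rwa [hRR] at h1
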